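/- Let F : ℝ^M × ℝ^M → ℝ be continuous, convex in the second variable, and coercive (for every compact K ⊆ ℝ^M, min_{y ∈ K} F(y,q) → +∞ as |q| → +∞), and assume its critical value c = inf { b ∈ ℝ : F(y,Du) = b admits a viscosity subsolution on ℝ^M } is finite. Let b ≥ c and let h : ℝ^M → ℝ be continuous with h ≥ 1 on ℝ^M and such that h(y) > 1 implies F(y,0) ≤ b. Then for every z0 ∈ ℝ^M the function y ↦ S_b^h(z0,y) is locally Lipschitz-continuous on ℝ^M and is a viscosity supersolution of F(y,Du) = b on ℝ^M ∖ {z0}. -/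

import Mathlib

open Set MeasureTheory Metric Filter
open scoped RealInnerProductSpace Topology

noncomputable section

/-- `ℝ^n` with the Euclidean structure. -/
abbrev Euc (n : ℕ) : Type := EuclideanSpace ℝ (Fin n)

/-- A control: a measurable map with values in the control set `A`. -/
def IsControl {k : ℕ} (A : Set (Euc k)) (α : ℝ → Euc k) : Prop :=
  Measurable α ∧ ∀ t, α t ∈ A

/-- `(ξ, η)` is a trajectory of the controlled dynamics `(CD_ε)` for the control `α`:
this is the integral form, equivalent to `(ξ, η)` being locally absolutely continuous
with `ξ' = ε f(ξ, η, α)` and `η' = g(ξ, η, α)` a.e. on `[0, ∞)`. -/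
def IsTrajectory {N M k : ℕ}
    (f : Euc N → Euc M → Euc k → Euc N) (g : Euc N → Euc M → Euc k → Euc M)
    (ε : ℝ) (α : ℝ → Euc k) (ξ : ℝ → Euc N) (η : ℝ → Euc M) : Prop :=
  (∀ t, 0 ≤ t → IntervalIntegrable (fun s => f (ξ s) (η s) (α s)) volume 0 t) ∧
  (∀ t, 0 ≤ t → IntervalIntegrable (fun s => g (ξ s) (η s) (α s)) volume 0 t) ∧
  (∀ t, 0 ≤ t → ξ t = ξ 0 + ε • ∫ s in (0:ℝ)..t, f (ξ s) (η s) (α s)) ∧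
  (∀ t, 0 ≤ t → η t = η 0 + ∫ s in (0:ℝ)..t, g (ξ s) (η s) (α s))

/-- The value function `V^ε(x, y, t)` of the singularly perturbed optimal control problem. -/
def valueFun {N M k : ℕ} (A : Set (Euc k))
    (f : Euc N → Euc M → Euc k → Euc N) (g : Euc N → Euc M → Euc k → Euc M)
    (ℓ : Euc N → Euc M → Euc k → ℝ) (u0 : Euc N → Euc M → ℝ)
    (ε : ℝ) (x : Euc N) (y : Euc M) (t : ℝ) : ℝ :=
  sInf { v : ℝ | ∃ (α : ℝ → Euc k) (ξ : ℝ → Euc N) (η : ℝ → Euc M),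
    IsControl A α ∧ IsTrajectory f g ε α ξ η ∧ ξ 0 = x ∧ η 0 = y ∧
    IntervalIntegrable (fun s => ℓ (ξ s) (η s) (α s)) volume 0 (t / ε) ∧
    v = ε * (∫ s in (0:ℝ)..(t / ε), ℓ (ξ s) (η s) (α s)) + u0 (ξ (t / ε)) (η (t / ε)) }

/-- The Hamiltonian `H(x,y,p,q) = max_{a ∈ A} { -p·f(x,y,a) - q·g(x,y,a) - ℓ(x,y,a) }`. -/
def Ham {N M k : ℕ} (A : Set (Euc k))
    (f : Euc N → Euc M → Euc k → Euc N) (g : Euc N → Euc M → Euc k → Euc M)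
    (ℓ : Euc N → Euc M → Euc k → ℝ)
    (x : Euc N) (y : Euc M) (p : Euc N) (q : Euc M) : ℝ :=
  sSup ((fun a => -⟪p, f x y a⟫ - ⟪q, g x y a⟫ - ℓ x y a) '' A)

/-- Viscosity subsolution of the stationary equation `G(y, Du) = b` on `Ω`. -/
def IsVSubOn {m : ℕ} (G : Euc m → Euc m → ℝ) (b : ℝ) (Ω : Set (Euc m)) (u : Euc m → ℝ) : Prop :=
  UpperSemicontinuousOn u Ω ∧
  ∀ ψ : Euc m → ℝ, ContDiff ℝ 1 ψ → ∀ y ∈ Ω,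
    IsLocalMaxOn (fun z => u z - ψ z) Ω y → G y (gradient ψ y) ≤ b

/-- Viscosity supersolution of the stationary equation `G(y, Du) = b` on `Ω`. -/
def IsVSupOn {m : ℕ} (G : Euc m → Euc m → ℝ) (b : ℝ) (Ω : Set (Euc m)) (u : Euc m → ℝ) : Prop :=
  LowerSemicontinuousOn u Ω ∧
  ∀ ψ : Euc m → ℝ, ContDiff ℝ 1 ψ → ∀ y ∈ Ω,
    IsLocalMinOn (fun z => u z - ψ z) Ω y → b ≤ G y (gradient ψ y)

/-- The set of levels `b` for which `F(y, Du) = b` has a viscosity subsolution on `ℝ^m`. -/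
def subsolLevels {m : ℕ} (F : Euc m → Euc m → ℝ) : Set ℝ :=
  { b : ℝ | ∃ u : Euc m → ℝ, IsVSubOn F b univ u }

/-- The critical value of a Hamiltonian `F` on `ℝ^m`. -/
def critVal {m : ℕ} (F : Euc m → Euc m → ℝ) : ℝ :=
  sInf (subsolLevels F)

/-- The effective Hamiltonian `H̄(x, p)`. -/
def effH {N M k : ℕ} (A : Set (Euc k))
    (f : Euc N → Euc M → Euc k → Euc N) (g : Euc N → Euc M → Euc k → Euc M)
    (ℓ : Euc N → Euc M → Euc k → ℝ) (x : Euc N) (p : Euc N) : ℝ :=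
  critVal (fun (y q : Euc M) => Ham A f g ℓ x y p q)

/-- The frozen Hamiltonian `H₀(y, q) = H(x₀, y, p₀, q)` of the cell problem. -/
def cellH {N M k : ℕ} (A : Set (Euc k))
    (f : Euc N → Euc M → Euc k → Euc N) (g : Euc N → Euc M → Euc k → Euc M)
    (ℓ : Euc N → Euc M → Euc k → ℝ) (x0 p0 : Euc N) : Euc M → Euc M → ℝ :=
  fun y q => Ham A f g ℓ x0 y p0 q

/-- Viscosity subsolution of `u_t + G(x, D_x u) = 0` on `Ω ⊆ ℝ^n × ℝ`. -/
def IsParabSubOn {n : ℕ} (G : Euc n → Euc n → ℝ) (Ω : Set (Euc n × ℝ)) (u : Euc n × ℝ → ℝ) : Prop :=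
  UpperSemicontinuousOn u Ω ∧
  ∀ ψ : Euc n × ℝ → ℝ, ContDiff ℝ 1 ψ → ∀ z ∈ Ω,
    IsLocalMaxOn (fun w => u w - ψ w) Ω z →
    deriv (fun s => ψ (z.1, s)) z.2 + G z.1 (gradient (fun x => ψ (x, z.2)) z.1) ≤ 0

/-- Viscosity supersolution of `u_t + G(x, D_x u) = 0` on `Ω ⊆ ℝ^n × ℝ`. -/
def IsParabSupOn {n : ℕ} (G : Euc n → Euc n → ℝ) (Ω : Set (Euc n × ℝ)) (u : Euc n × ℝ → ℝ) : Prop :=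
  LowerSemicontinuousOn u Ω ∧
  ∀ ψ : Euc n × ℝ → ℝ, ContDiff ℝ 1 ψ → ∀ z ∈ Ω,
    IsLocalMinOn (fun w => u w - ψ w) Ω z →
    0 ≤ deriv (fun s => ψ (z.1, s)) z.2 + G z.1 (gradient (fun x => ψ (x, z.2)) z.1)

/-- Viscosity subsolution of `u_t + H(x, y, D_x u, D_y u / ε) = 0` on `Ω ⊆ (ℝ^N × ℝ^M) × ℝ`. -/
def IsHJSubOn {N M : ℕ} (Hm : Euc N → Euc M → Euc N → Euc M → ℝ) (ε : ℝ)
    (Ω : Set ((Euc N × Euc M) × ℝ)) (u : (Euc N × Euc M) × ℝ → ℝ) : Prop :=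
  UpperSemicontinuousOn u Ω ∧
  ∀ ψ : (Euc N × Euc M) × ℝ → ℝ, ContDiff ℝ 1 ψ → ∀ z ∈ Ω,
    IsLocalMaxOn (fun w => u w - ψ w) Ω z →
    deriv (fun s => ψ (z.1, s)) z.2 +
      Hm z.1.1 z.1.2 (gradient (fun x => ψ ((x, z.1.2), z.2)) z.1.1)
        (ε⁻¹ • gradient (fun y => ψ ((z.1.1, y), z.2)) z.1.2) ≤ 0

/-- Viscosity supersolution of `u_t + H(x, y, D_x u, D_y u / ε) = 0` on `Ω`. -/
def IsHJSupOn {N M : ℕ} (Hm : Euc N → Euc M → Euc N → Euc M → ℝ) (ε : ℝ)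
    (Ω : Set ((Euc N × Euc M) × ℝ)) (u : (Euc N × Euc M) × ℝ → ℝ) : Prop :=
  LowerSemicontinuousOn u Ω ∧
  ∀ ψ : (Euc N × Euc M) × ℝ → ℝ, ContDiff ℝ 1 ψ → ∀ z ∈ Ω,
    IsLocalMinOn (fun w => u w - ψ w) Ω z →
    0 ≤ deriv (fun s => ψ (z.1, s)) z.2 +
      Hm z.1.1 z.1.2 (gradient (fun x => ψ ((x, z.1.2), z.2)) z.1.1)
        (ε⁻¹ • gradient (fun y => ψ ((z.1.1, y), z.2)) z.1.2)

/-- The upper weak semilimit `(limsup^# V^ε)(z)`. -/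
def upperLim {Z : Type*} [TopologicalSpace Z] (V : ℝ → Z → ℝ) (z : Z) : ℝ :=
  sSup { l : ℝ | ∃ (e : ℕ → ℝ) (w : ℕ → Z), (∀ n, 0 < e n) ∧
    Tendsto e atTop (𝓝 0) ∧ Tendsto w atTop (𝓝 z) ∧
    l = Filter.limsup (fun n => V (e n) (w n)) atTop }

/-- The lower weak semilimit `(liminf_# V^ε)(z)`. -/
def lowerLim {Z : Type*} [TopologicalSpace Z] (V : ℝ → Z → ℝ) (z : Z) : ℝ :=
  sInf { l : ℝ | ∃ (e : ℕ → ℝ) (w : ℕ → Z), (∀ n, 0 < e n) ∧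
    Tendsto e atTop (𝓝 0) ∧ Tendsto w atTop (𝓝 z) ∧
    l = Filter.liminf (fun n => V (e n) (w n)) atTop }

/-- The lower semicontinuous envelope `φ_#`. -/
def lscEnvelope {X : Type*} [TopologicalSpace X] (φ : X → ℝ) (x : X) : ℝ :=
  Filter.liminf φ (𝓝 x)

/-- Local equiboundedness of the family of value functions. -/
def LocEquibounded {N M : ℕ} (V : ℝ → Euc N → Euc M → ℝ → ℝ) : Prop :=
  ∀ C : Set (Euc N × Euc M × ℝ), Bornology.IsBounded C →
    ∃ Mb : ℝ, ∀ ε : ℝ, 0 < ε → ∀ z ∈ C, 0 ≤ z.2.2 → |V ε z.1 z.2.1 z.2.2| ≤ Mb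

/-- The sublevel set `Z_b(y)` of a Hamiltonian. -/
def sublevel {m : ℕ} (G : Euc m → Euc m → ℝ) (b : ℝ) (y : Euc m) : Set (Euc m) :=
  { q | G y q ≤ b }

/-- The support function `σ_b(y, v)` of the sublevel `Z_b(y)`. -/
def suppFn {m : ℕ} (G : Euc m → Euc m → ℝ) (b : ℝ) (y v : Euc m) : ℝ :=
  sSup ((fun q => ⟪q, v⟫) '' sublevel G b y)

/-- The intrinsic length of a curve (Lipschitz curves are differentiable a.e.). -/
def intrinsicLen {m : ℕ} (G : Euc m → Euc m → ℝ) (b : ℝ) (ξ : ℝ → Euc m) : ℝ :=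
  ∫ s in (0:ℝ)..1, suppFn G b (ξ s) (deriv ξ s)

/-- Admissible (Lipschitz) curves on `[0,1]` joining `y₁` to `y₂`. -/
def IsAdmCurve {m : ℕ} (ξ : ℝ → Euc m) (y₁ y₂ : Euc m) : Prop :=
  (∃ Kl : NNReal, LipschitzWith Kl ξ) ∧ ξ 0 = y₁ ∧ ξ 1 = y₂

/-- The intrinsic distance `S_b(y₁, y₂)`. -/
def intrinsicDist {m : ℕ} (G : Euc m → Euc m → ℝ) (b : ℝ) (y₁ y₂ : Euc m) : ℝ :=
  sInf { L : ℝ | ∃ ξ : ℝ → Euc m, IsAdmCurve ξ y₁ y₂ ∧ L = intrinsicLen G b ξ }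

/-- The weighted intrinsic length associated with a weight `h`. -/
def wIntrinsicLen {m : ℕ} (G : Euc m → Euc m → ℝ) (b : ℝ) (h : Euc m → ℝ) (ξ : ℝ → Euc m) : ℝ :=
  ∫ s in (0:ℝ)..1, h (ξ s) * suppFn G b (ξ s) (deriv ξ s)

/-- The weighted intrinsic distance `S_b^h(y₁, y₂)`. -/
def wIntrinsicDist {m : ℕ} (G : Euc m → Euc m → ℝ) (b : ℝ) (h : Euc m → ℝ) (y₁ y₂ : Euc m) : ℝ :=
  sInf { L : ℝ | ∃ ξ : ℝ → Euc m, IsAdmCurve ξ y₁ y₂ ∧ L = wIntrinsicLen G b h ξ }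

/-- The intrinsic critical distance `S(y₁, y₂)` of the cell problem at `(x₀, p₀)`. -/
def cellS {N M k : ℕ} (A : Set (Euc k))
    (f : Euc N → Euc M → Euc k → Euc N) (g : Euc N → Euc M → Euc k → Euc M)
    (ℓ : Euc N → Euc M → Euc k → ℝ) (x0 p0 : Euc N) (y₁ y₂ : Euc M) : ℝ :=
  intrinsicDist (cellH A f g ℓ x0 p0) (effH A f g ℓ x0 p0) y₁ y₂

/-- The Aubry set of `G` at the level `c`: points near which no global viscosity
subsolution of `G(y, Du) = c` is strict. -/
def AubrySet {m : ℕ} (G : Euc m → Euc m → ℝ) (c : ℝ) : Set (Euc m) :=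
  { y₀ | ¬ ∃ (u : Euc m → ℝ) (δ : ℝ) (U : Set (Euc m)),
      IsVSubOn G c univ u ∧ 0 < δ ∧ IsOpen U ∧ y₀ ∈ U ∧ IsVSubOn G (c - δ) U u }

end


def IsCoer {m : ℕ} (F : Euc m → Euc m → ℝ) : Prop :=
  ∀ Kc : Set (Euc m), IsCompact Kc → ∀ c : ℝ, ∃ R : ℝ,
      ∀ q : Euc m, R < ‖q‖ → ∀ y ∈ Kc, c < F y q

lemma IsCoer.bound {m : ℕ} {F : Euc m → Euc m → ℝ} (hco : IsCoer F) {K : Set (Euc m)}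
    (hK : IsCompact K) (B : ℝ) :
    ∃ R : ℝ, 0 ≤ R ∧ ∀ y ∈ K, ∀ q, F y q ≤ B → ‖q‖ ≤ R := by
  obtain ⟨R, hR⟩ := hco K hK B
  refine ⟨max R 0, le_max_right _ _, fun y hy q hq => ?_⟩
  by_contra hlt
  have := hR q (lt_of_le_of_lt (le_max_left _ _) (not_le.1 hlt)) y hy
  linarith

lemma compact_seq {m : ℕ} {F : Euc m → Euc m → ℝ}
    (hFc : Continuous fun z : Euc m × Euc m => F z.1 z.2) (hco : IsCoer F)
    {y q : ℕ → Euc m} {β : ℕ → ℝ} {y0 : Euc m} {β0 : ℝ}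
    (hy : Tendsto y atTop (𝓝 y0)) (hβ : Tendsto β atTop (𝓝 β0))
    (hF : ∀ n, F (y n) (q n) ≤ β n) :
    ∃ q0, F y0 q0 ≤ β0 ∧ ∃ φ : ℕ → ℕ, StrictMono φ ∧ Tendsto (q ∘ φ) atTop (𝓝 q0) := by
  obtain ⟨B, hB⟩ := hβ.bddAbove_range
  obtain ⟨R, hR0, hR⟩ := hco.bound hy.isCompact_insert_range B
  have hq : ∀ n, q n ∈ closedBall (0 : Euc m) R := fun n => by
    rw [mem_closedBall_zero_iff]
    exact hR (y n) (Or.inr ⟨n, rfl⟩) _ ((hF n).trans (hB ⟨n, rfl⟩))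
  obtain ⟨q0, -, φ, hφ, hlim⟩ := (isCompact_closedBall (0 : Euc m) R).tendsto_subseq hq
  refine ⟨q0, ?_, φ, hφ, hlim⟩
  have h1 : Tendsto (fun n => F (y (φ n)) (q (φ n))) atTop (𝓝 (F y0 q0)) :=
    (hFc.tendsto (y0, q0)).comp ((hy.comp hφ.tendsto_atTop).prodMk_nhds hlim)
  exact le_of_tendsto_of_tendsto' h1 (hβ.comp hφ.tendsto_atTop) fun n => hF (φ n)

lemma le_suppFn {m : ℕ} {F : Euc m → Euc m → ℝ} (hco : IsCoer F) {b : ℝ} {y q : Euc m}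
    (v : Euc m) (hq : F y q ≤ b) : ⟪q, v⟫ ≤ suppFn F b y v := by
  obtain ⟨R, hR0, hR⟩ := hco.bound (isCompact_singleton (x := y)) b
  refine le_csSup ⟨R * ‖v‖, ?_⟩ ⟨q, hq, rfl⟩
  rintro _ ⟨p, hp, rfl⟩
  exact (real_inner_le_norm _ _).trans
    (mul_le_mul_of_nonneg_right (hR y rfl p hp) (norm_nonneg _))

lemma suppFn_le {m : ℕ} {F : Euc m → Euc m → ℝ} {b : ℝ} {y : Euc m}
    (hne : ∃ q, F y q ≤ b) {v : Euc m} {a : ℝ} (ha : ∀ q, F y q ≤ b → ⟪q, v⟫ ≤ a) :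
    suppFn F b y v ≤ a := by
  obtain ⟨q, hq⟩ := hne
  refine csSup_le ⟨_, q, hq, rfl⟩ ?_
  rintro _ ⟨p, hp, rfl⟩
  exact ha p hp

lemma exists_suppFn {m : ℕ} {F : Euc m → Euc m → ℝ}
    (hFc : Continuous fun z : Euc m × Euc m => F z.1 z.2) (hco : IsCoer F) {b : ℝ} {y : Euc m}
    (hne : ∃ q, F y q ≤ b) (v : Euc m) : ∃ q, F y q ≤ b ∧ ⟪q, v⟫ = suppFn F b y v := by
  obtain ⟨R, hR0, hR⟩ := hco.bound (isCompact_singleton (x := y)) b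
  have hcl : IsClosed {q | F y q ≤ b} :=
    isClosed_le (hFc.comp (continuous_const.prodMk continuous_id)) continuous_const
  have hcpt : IsCompact {q | F y q ≤ b} :=
    (isCompact_closedBall (0 : Euc m) R).of_isClosed_subset hcl fun q hq => by
      rw [mem_closedBall_zero_iff]; exact hR y rfl q hq
  have hc : Continuous fun q : Euc m => ⟪q, v⟫ := by fun_prop
  obtain ⟨q, hq, hmax⟩ := hcpt.exists_isMaxOn hne hc.continuousOn
  exact ⟨q, hq, le_antisymm (le_suppFn hco v hq) (suppFn_le hne fun p hp => hmax hp)⟩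

lemma suppFn_seq {m : ℕ} {F : Euc m → Euc m → ℝ}
    (hFc : Continuous fun z : Euc m × Euc m => F z.1 z.2) (hco : IsCoer F)
    {y v : ℕ → Euc m} {β : ℕ → ℝ} {y0 v0 : Euc m} {β0 a : ℝ}
    (hy : Tendsto y atTop (𝓝 y0)) (hv : Tendsto v atTop (𝓝 v0)) (hβ : Tendsto β atTop (𝓝 β0))
    (hne : ∀ n, ∃ q, F (y n) q ≤ β n) (ha : ∀ n, a ≤ suppFn F (β n) (y n) (v n)) :
    a ≤ suppFn F β0 y0 v0 := by
  choose q hq hqv using fun n => exists_suppFn hFc hco (hne n) (v n)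
  obtain ⟨q0, hq0, φ, hφ, hlim⟩ := compact_seq hFc hco hy hβ hq
  have h1 : Tendsto (fun n => ⟪q (φ n), v (φ n)⟫) atTop (𝓝 ⟪q0, v0⟫) :=
    Tendsto.inner hlim (hv.comp hφ.tendsto_atTop)
  exact (ge_of_tendsto' h1 fun n => by rw [hqv]; exact ha _).trans (le_suppFn hco v0 hq0)

lemma suppFn_usc {m : ℕ} {F : Euc m → Euc m → ℝ}
    (hFc : Continuous fun z : Euc m × Euc m => F z.1 z.2) (hco : IsCoer F) {b : ℝ}
    (hne : ∀ y, ∃ q, F y q ≤ b) :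
    UpperSemicontinuous fun z : Euc m × Euc m => suppFn F b z.1 z.2 := by
  rw [upperSemicontinuous_iff_isClosed_preimage]
  intro a
  apply IsSeqClosed.isClosed
  intro z z0 hz hlim
  exact suppFn_seq hFc hco (β := fun _ => b) ((continuous_fst.tendsto z0).comp hlim)
    ((continuous_snd.tendsto z0).comp hlim) tendsto_const_nhds (fun n => hne _) hz

lemma suppFn_smul {m : ℕ} {F : Euc m → Euc m → ℝ} {b t : ℝ} (ht : 0 ≤ t) (y v : Euc m) :
    suppFn F b y (t • v) = t * suppFn F b y v := by
  unfold suppFn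
  rw [← smul_eq_mul, ← Real.sSup_smul_of_nonneg ht]
  congr 1
  ext x
  simp [inner_smul_right, Set.mem_smul_set]

lemma abs_suppFn_le {m : ℕ} {F : Euc m → Euc m → ℝ} (hco : IsCoer F) {b R : ℝ} {y v : Euc m}
    (hne : ∃ q, F y q ≤ b) (hR : ∀ q, F y q ≤ b → ‖q‖ ≤ R) : |suppFn F b y v| ≤ R * ‖v‖ := by
  have key : ∀ q, F y q ≤ b → |⟪q, v⟫| ≤ R * ‖v‖ := fun q hq =>
    (abs_real_inner_le_norm _ _).trans (mul_le_mul_of_nonneg_right (hR q hq) (norm_nonneg _))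
  rw [abs_le]
  constructor
  · obtain ⟨q, hq⟩ := hne
    exact (abs_le.1 (key q hq)).1.trans (le_suppFn hco v hq)
  · exact suppFn_le hne fun q hq => (abs_le.1 (key q hq)).2

lemma suppFn_le_weight {m : ℕ} {F : Euc m → Euc m → ℝ} (hco : IsCoer F) {b : ℝ} {h : Euc m → ℝ}
    (hh1 : ∀ y, 1 ≤ h y) (hh2 : ∀ y : Euc m, 1 < h y → F y 0 ≤ b) (y v : Euc m) :
    suppFn F b y v ≤ h y * suppFn F b y v := by
  rcases (hh1 y).eq_or_lt with h1 | h1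
  · rw [← h1, one_mul]
  · have := le_suppFn hco v (hh2 y h1)
    rw [inner_zero_left] at this
    nlinarith

lemma suppFn_mono {m : ℕ} {F : Euc m → Euc m → ℝ} (hco : IsCoer F) {b b' : ℝ} {y y' : Euc m}
    (hne : ∃ q, F y q ≤ b) (hsub : ∀ q, F y q ≤ b → F y' q ≤ b') (v : Euc m) :
    suppFn F b y v ≤ suppFn F b' y' v :=
  suppFn_le hne fun q hq => le_suppFn hco v (hsub q hq)

lemma wint_measurable {m : ℕ} {F : Euc m → Euc m → ℝ}
    (hFc : Continuous fun z : Euc m × Euc m => F z.1 z.2) (hco : IsCoer F) {b : ℝ}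
    (hne : ∀ y, ∃ q, F y q ≤ b) {h : Euc m → ℝ} (hh : Continuous h) {ξ : ℝ → Euc m}
    (hξ : Continuous ξ) : Measurable fun s => h (ξ s) * suppFn F b (ξ s) (deriv ξ s) := by
  have h1 : Measurable fun z : Euc m × Euc m => suppFn F b z.1 z.2 :=
    (suppFn_usc hFc hco hne).measurable
  have h2 : Measurable fun s => (ξ s, deriv ξ s) := hξ.measurable.prodMk (measurable_deriv ξ)
  have h3 : Measurable fun s => suppFn F b (ξ s) (deriv ξ s) := by
    have := h1.comp h2
    exact this
  have h4 : Measurable fun s => h (ξ s) := (hh.comp hξ).measurable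
  exact h4.mul h3

lemma wint_integrable {m : ℕ} {F : Euc m → Euc m → ℝ}
    (hFc : Continuous fun z : Euc m × Euc m => F z.1 z.2) (hco : IsCoer F) {b : ℝ}
    (hne : ∀ y, ∃ q, F y q ≤ b) {h : Euc m → ℝ} (hh : Continuous h) {ξ : ℝ → Euc m}
    {C : NNReal} (hξ : LipschitzWith C ξ) (a a' : ℝ) :
    IntervalIntegrable (fun s => h (ξ s) * suppFn F b (ξ s) (deriv ξ s)) volume a a' := by
  have hK : IsCompact (ξ '' uIcc a a') := isCompact_uIcc.image hξ.continuous
  obtain ⟨R, hR0, hR⟩ := hco.bound hK b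
  obtain ⟨H, hH⟩ := hK.exists_bound_of_continuousOn hh.continuousOn
  refine (intervalIntegrable_const (c := H * (R * C))).mono_fun'
    (wint_measurable hFc hco hne hh hξ.continuous).aestronglyMeasurable ?_
  refine (ae_restrict_mem measurableSet_uIoc).mono fun s hs => ?_
  have hs' : ξ s ∈ ξ '' uIcc a a' := ⟨s, uIoc_subset_uIcc hs, rfl⟩
  dsimp only
  rw [norm_mul]
  have h1 := hH _ hs'
  have h2 := abs_suppFn_le hco (v := deriv ξ s) (hne (ξ s)) (hR _ hs')
  have h3 : ‖deriv ξ s‖ ≤ C := norm_deriv_le_of_lipschitz hξ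
  have h4 : R * ‖deriv ξ s‖ ≤ R * C := mul_le_mul_of_nonneg_left h3 hR0
  exact mul_le_mul h1 (h2.trans h4) (norm_nonneg _) ((norm_nonneg _).trans h1)

lemma sint_integrable {m : ℕ} {F : Euc m → Euc m → ℝ}
    (hFc : Continuous fun z : Euc m × Euc m => F z.1 z.2) (hco : IsCoer F) {b : ℝ}
    (hne : ∀ y, ∃ q, F y q ≤ b) {ξ : ℝ → Euc m}
    {C : NNReal} (hξ : LipschitzWith C ξ) (a a' : ℝ) :
    IntervalIntegrable (fun s => suppFn F b (ξ s) (deriv ξ s)) volume a a' := by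
  simpa using wint_integrable hFc hco hne (h := fun _ => 1) continuous_const hξ a a'


lemma interior_max {m : ℕ} {u φ : Euc m → ℝ} (hu : UpperSemicontinuousOn u univ)
    (hφ : Continuous φ) {x : Euc m} {r : ℝ} (hr : 0 < r)
    (hb : ∀ z ∈ sphere x r, u z - φ z < u x - φ x) :
    ∃ z ∈ ball x r, IsLocalMax (fun w => u w - φ w) z ∧
      ∀ w ∈ closedBall x r, u w - φ w ≤ u z - φ z := by
  have husc : UpperSemicontinuousOn (fun w => u w - φ w) (closedBall x r) := by
    have h1 : UpperSemicontinuousOn (fun w => - φ w) (closedBall x r) :=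
      hφ.neg.continuousOn.upperSemicontinuousOn
    simpa only [sub_eq_add_neg] using (hu.mono (subset_univ _)).add h1
  obtain ⟨z, hz, hmax⟩ := husc.exists_isMaxOn (nonempty_closedBall.2 hr.le)
    (isCompact_closedBall x r)
  have hz' : z ∈ ball x r := by
    rw [mem_closedBall] at hz
    rcases hz.lt_or_eq with h | h
    · exact h
    · have h1 := hb z h
      have h2 : u x - φ x ≤ u z - φ z := hmax (mem_closedBall_self hr.le)
      linarith
  refine ⟨z, hz', ?_, fun w hw => hmax hw⟩
  filter_upwards [isOpen_ball.mem_nhds hz'] with w hw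
  exact hmax (ball_subset_closedBall hw)

lemma local_test {m : ℕ} {F : Euc m → Euc m → ℝ} {b : ℝ} {u φ : Euc m → ℝ}
    (hsub : IsVSubOn F b univ u) {z : Euc m} (hφ : ContDiffAt ℝ 1 φ z)
    (hmax : IsLocalMax (fun w => u w - φ w) z) : F z (gradient φ z) ≤ b := by
  obtain ⟨ε, hε, hball⟩ := Metric.eventually_nhds_iff_ball.1 (hφ.eventually (by simp))
  let f : ContDiffBump z := ⟨ε / 3, ε / 2, by linarith, by linarith⟩
  have heq : (fun w => f w * φ w) =ᶠ[𝓝 z] φ := by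
    filter_upwards [f.eventuallyEq_one] with w hw
    simp [hw]
  have hgr : gradient (fun w => f w * φ w) z = gradient φ z := by
    unfold gradient; rw [heq.fderiv_eq]
  rw [← hgr]
  refine hsub.2 _ ?_ z (mem_univ _) ?_
  · rw [contDiff_iff_contDiffAt]
    intro w
    by_cases hw : w ∈ ball z ε
    · exact f.contDiff.contDiffAt.mul (hball w hw)
    · have hw2 : w ∉ tsupport (fun w => f w) := by
        have := f.tsupport_eq
        intro hmem
        rw [this] at hmem
        have h3 : dist w z ≤ ε / 2 := hmem
        exact hw (by rw [mem_ball]; linarith)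
      have h0 : (fun w => f w * φ w) =ᶠ[𝓝 w] fun _ => 0 := by
        filter_upwards [notMem_tsupport_iff_eventuallyEq.1 hw2] with v hv
        simp [hv]
      exact (contDiffAt_const (c := (0 : ℝ))).congr_of_eventuallyEq h0
  · rw [isLocalMaxOn_univ_iff]
    filter_upwards [hmax, heq] with w hw hw2
    have := heq.self_of_nhds
    simp only at this hw2 ⊢
    rw [hw2, this]; exact hw

lemma usc_bound {m : ℕ} {u : Euc m → ℝ} (hu : UpperSemicontinuousOn u univ) {K : Set (Euc m)}
    (hK : IsCompact K) : ∃ C, ∀ y ∈ K, u y ≤ C := by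
  obtain ⟨C, hC⟩ := (hu.mono (subset_univ K)).bddAbove_of_isCompact hK
  exact ⟨C, fun y hy => hC ⟨y, hy, rfl⟩⟩

lemma quad_hasGradient {m : ℕ} (p x z : Euc m) (n : ℝ) :
    HasGradientAt (fun w : Euc m => ⟪p, w⟫ + n * ‖w - x‖ ^ 2) (p + (2 * n) • (z - x)) z := by
  rw [hasGradientAt_iff_hasFDerivAt]
  have h1 : HasFDerivAt (fun w : Euc m => ⟪p, w⟫) (innerSL ℝ p) z := (innerSL ℝ p).hasFDerivAt
  have h2 : HasFDerivAt (fun w : Euc m => ‖w - x‖ ^ 2) (2 • innerSL ℝ (z - x)) z := by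
    have h3 : HasFDerivAt (fun w : Euc m => w - x) (ContinuousLinearMap.id ℝ (Euc m)) z :=
      (hasFDerivAt_id z).sub_const x
    exact h3.norm_sq.congr_fderiv (by ext w; simp)
  refine (h1.add (h2.const_mul n)).congr_fderiv ?_
  ext w
  simp [inner_add_left, inner_smul_left]
  ring

lemma quad_contDiff {m : ℕ} (p x : Euc m) (n : ℝ) :
    ContDiff ℝ 1 (fun w : Euc m => ⟪p, w⟫ + n * ‖w - x‖ ^ 2) := by
  have h1 : ContDiff ℝ 1 (fun w : Euc m => ‖w - x‖ ^ 2) :=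
    (contDiff_norm_sq ℝ).comp (contDiff_id.sub contDiff_const)
  exact (innerSL ℝ p).contDiff.add (contDiff_const.mul h1)

lemma sub_touch {m : ℕ} {F : Euc m → Euc m → ℝ} {b : ℝ} {u : Euc m → ℝ}
    (hsub : IsVSubOn F b univ u) (x : Euc m) {r : ℝ} (hr : 0 < r) :
    ∃ z ∈ ball x r, ∃ q, F z q ≤ b := by
  obtain ⟨C, hC⟩ := usc_bound hsub.1 (isCompact_closedBall x r)
  set n := (C - u x + 1) / r ^ 2 with hn
  have hcd := quad_contDiff 0 x n
  obtain ⟨z, hz, hmax, -⟩ := interior_max hsub.1 hcd.continuous hr (by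
    intro z hz
    have h1 := hC z (sphere_subset_closedBall hz)
    rw [mem_sphere_iff_norm] at hz
    have h2 : n * r ^ 2 = C - u x + 1 := by rw [hn]; field_simp
    simp only [inner_zero_left, hz, sub_self, norm_zero]
    rw [h2]; norm_num; linarith)
  exact ⟨z, hz, _, local_test hsub hcd.contDiffAt hmax⟩

lemma level_nonempty {m : ℕ} {F : Euc m → Euc m → ℝ}
    (hFc : Continuous fun z : Euc m × Euc m => F z.1 z.2) (hco : IsCoer F)
    (hfin : (subsolLevels F).Nonempty) 
    {b : ℝ} (hb : critVal F ≤ b) (y : Euc m) : ∃ q, F y q ≤ b := by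
  have key : ∀ n : ℕ, ∃ z ∈ ball y (1 / ((n : ℝ) + 1)), ∃ q, F z q ≤ b + 1 / ((n : ℝ) + 1) := by
    intro n
    have hpos : 0 < 1 / ((n : ℝ) + 1) := by positivity
    obtain ⟨b', ⟨u, hu⟩, hb'⟩ := exists_lt_of_csInf_lt hfin
      (show sInf (subsolLevels F) < b + 1 / ((n : ℝ) + 1) from lt_of_le_of_lt hb (by linarith))
    obtain ⟨z, hz, q, hq⟩ := sub_touch hu y hpos
    exact ⟨z, hz, q, by linarith⟩
  choose z hz q hq using key
  have h0 := tendsto_one_div_add_atTop_nhds_zero_nat (𝕜 := ℝ)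
  have hzl : Tendsto z atTop (𝓝 y) := by
    rw [tendsto_iff_dist_tendsto_zero]
    exact squeeze_zero (fun _ => dist_nonneg) (fun n => (hz n).le) h0
  have hbl : Tendsto (fun n : ℕ => b + 1 / ((n : ℝ) + 1)) atTop (𝓝 b) := by
    simpa using h0.const_add b
  obtain ⟨q0, hq0, -⟩ := compact_seq hFc hco hzl hbl hq
  exact ⟨q0, hq0⟩

lemma sub_diff {m : ℕ} {F : Euc m → Euc m → ℝ}
    (hFc : Continuous fun z : Euc m × Euc m => F z.1 z.2) {b : ℝ} {u : Euc m → ℝ}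
    (hsub : IsVSubOn F b univ u) {x p : Euc m} (hp : HasGradientAt u p x) : F x p ≤ b := by
  have key : ∀ ε : ℝ, 0 < ε → ∃ z q, dist z x < ε ∧ dist q p ≤ 4 * ε ∧ F z q ≤ b := by
    intro ε hε
    rw [hasGradientAt_iff_isLittleO] at hp
    obtain ⟨r0, hr0, hr⟩ := Metric.eventually_nhds_iff_ball.1 (hp.def hε)
    set r := min r0 ε / 2 with hrdef
    have hmin : 0 < min r0 ε := lt_min hr0 hε
    have hrpos : 0 < r := by positivity
    have hrr0 : r < r0 := by have := min_le_left r0 ε; linarith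
    have hrε : r < ε := by have := min_le_right r0 ε; linarith
    have hcd := quad_contDiff p x (2 * ε / r)
    obtain ⟨z, hz, hmax, -⟩ := interior_max hsub.1 hcd.continuous hrpos (by
      intro z hz
      have hz' : ‖z - x‖ = r := by rwa [mem_sphere_iff_norm] at hz
      have h1 := hr z (by rw [mem_ball, mem_sphere.1 hz]; exact hrr0)
      rw [Real.norm_eq_abs, hz', inner_sub_right] at h1
      have h2 := (abs_le.1 h1).2
      have h3 : 2 * ε / r * r ^ 2 = 2 * ε * r := by field_simp
      rw [hz', h3]
      simp only [sub_self, norm_zero]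
      have : 0 < ε * r := by positivity
      norm_num
      linarith)
    refine ⟨z, _, lt_trans hz hrε, ?_, local_test hsub hcd.contDiffAt hmax⟩
    rw [(quad_hasGradient p x z (2 * ε / r)).gradient, dist_eq_norm, add_sub_cancel_left,
      norm_smul, Real.norm_eq_abs, abs_of_pos (by positivity)]
    rw [mem_ball, dist_eq_norm] at hz
    calc 2 * (2 * ε / r) * ‖z - x‖ ≤ 2 * (2 * ε / r) * r := by gcongr
      _ = 4 * ε := by field_simp; norm_num
  choose z q hz hq hF using fun n : ℕ => key (1 / ((n : ℝ) + 1)) (by positivity)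
  have h0 := tendsto_one_div_add_atTop_nhds_zero_nat (𝕜 := ℝ)
  have hzl : Tendsto z atTop (𝓝 x) := by
    rw [tendsto_iff_dist_tendsto_zero]
    exact squeeze_zero (fun _ => dist_nonneg) (fun n => (hz n).le) h0
  have hql : Tendsto q atTop (𝓝 p) := by
    rw [tendsto_iff_dist_tendsto_zero]
    refine squeeze_zero (fun _ => dist_nonneg) (fun n => hq n) ?_
    simpa using h0.const_mul 4
  exact le_of_tendsto' ((hFc.tendsto (x, p)).comp (hzl.prodMk_nhds hql)) hF

lemma norm_gradient_kink {m : ℕ} {y z : Euc m} (hzy : z ≠ y) {L : ℝ} (hL : 0 ≤ L) :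
    ContDiffAt ℝ 1 (fun w : Euc m => L * ‖w - y‖) z ∧
      ‖gradient (fun w : Euc m => L * ‖w - y‖) z‖ = L := by
  have hne : z - y ≠ 0 := sub_ne_zero.2 hzy
  have : Nontrivial (Euc m) := ⟨z, y, hzy⟩
  have h1 : ContDiffAt ℝ 1 (fun w : Euc m => ‖w - y‖) z :=
    (contDiffAt_id.sub contDiffAt_const).norm ℝ hne
  refine ⟨contDiffAt_const.mul h1, ?_⟩
  have hd : DifferentiableAt ℝ (fun w : Euc m => ‖w‖) (z - y) :=
    (contDiffAt_norm (n := 1) ℝ hne).differentiableAt (by simp)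
  have h2 : fderiv ℝ (fun w : Euc m => ‖w - y‖) z = fderiv ℝ (fun w : Euc m => ‖w‖) (z - y) :=
    fderiv_comp_sub (f := fun w : Euc m => ‖w‖) y
  unfold gradient
  rw [LinearIsometryEquiv.norm_map, fderiv_const_mul (h1.differentiableAt (by simp)), h2,
    norm_smul, norm_fderiv_norm hd, mul_one, Real.norm_eq_abs, abs_of_nonneg hL]

lemma sub_growth {m : ℕ} {F : Euc m → Euc m → ℝ} {b : ℝ} {u : Euc m → ℝ}
    (hsub : IsVSubOn F b univ u) {x0 y : Euc m} {ρ R C L : ℝ} (hρ : 0 < ρ) (hR0 : 0 ≤ R)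
    (hR : ∀ y ∈ closedBall x0 (2 * ρ), ∀ q, F y q ≤ b → ‖q‖ ≤ R)
    (hC : ∀ y ∈ closedBall x0 (2 * ρ), u y ≤ C) (hy : y ∈ closedBall x0 ρ)
    (hL : R < L) (hL2 : C - u y < L * ρ) :
    ∀ z ∈ closedBall y ρ, u z ≤ u y + L * ‖z - y‖ := by
  have hsubset : ∀ z ∈ closedBall y ρ, z ∈ closedBall x0 (2 * ρ) := by
    intro z hz
    rw [mem_closedBall] at *
    have := dist_triangle z y x0
    linarith
  have hcont : Continuous fun w : Euc m => L * ‖w - y‖ := by fun_prop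
  obtain ⟨z, hz, hmax, hall⟩ := interior_max hsub.1 hcont hρ (by
    intro z hz
    have h1 := hC z (hsubset z (sphere_subset_closedBall hz))
    rw [mem_sphere_iff_norm] at hz
    rw [hz]; simp; linarith)
  have hzy : z = y := by
    by_contra hne
    obtain ⟨hcd, hn⟩ := norm_gradient_kink hne (hR0.trans hL.le)
    have h1 := hR z (hsubset z (ball_subset_closedBall hz)) _ (local_test hsub hcd hmax)
    rw [hn] at h1
    linarith
  intro w hw
  have := hall w hw
  rw [hzy] at this
  simp at this
  linarith

lemma sub_lip {m : ℕ} {F : Euc m → Euc m → ℝ} (hco : IsCoer F) {b : ℝ} {u : Euc m → ℝ}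
    (hsub : IsVSubOn F b univ u) (x0 : Euc m) {ρ : ℝ} (hρ : 0 < ρ) :
    ∃ K : NNReal, LipschitzOnWith K u (closedBall x0 (ρ / 2)) := by
  obtain ⟨R, hR0, hR⟩ := hco.bound (isCompact_closedBall x0 (2 * ρ)) b
  obtain ⟨C, hC⟩ := usc_bound hsub.1 (isCompact_closedBall x0 (2 * ρ))
  set D := max ((R + 1) * ρ) (2 * (C - u x0) + ρ) with hD
  have hD0 : 0 ≤ D := le_trans (by positivity) (le_max_left _ _)
  have hlow : ∀ y ∈ closedBall x0 (ρ / 2), C - u y ≤ D := by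
    intro y hy
    rw [mem_closedBall] at hy
    rcases lt_or_ge (C - u y) ((R + 1) * ρ) with h | h
    · exact h.le.trans (le_max_left _ _)
    · refine le_trans ?_ (le_max_right _ _)
      set L := (C - u y) / ρ + 1 with hL
      have h1 : R + 1 ≤ (C - u y) / ρ := by rwa [le_div_iff₀ hρ]
      have h2 : L * ρ = C - u y + ρ := by rw [hL]; field_simp
      have h3 := sub_growth hsub hρ hR0 hR hC (y := y) (L := L)
        (by rw [mem_closedBall]; linarith) (by linarith) (by linarith) x0
        (by rw [mem_closedBall, dist_comm]; linarith)
      rw [← dist_eq_norm, dist_comm] at h3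
      have h4 : L * dist y x0 ≤ L * (ρ / 2) := by
        apply mul_le_mul_of_nonneg_left hy; linarith
      nlinarith
  set L := D / ρ + R + 1 with hL
  have hDρ : 0 ≤ D / ρ := by positivity
  refine ⟨⟨L, by linarith⟩, LipschitzOnWith.of_le_add_mul _ ?_⟩
  intro z hz y hy
  rw [dist_eq_norm]
  have h2 : L * ρ = D + (R + 1) * ρ := by rw [hL]; field_simp; ring
  have h5 := hlow y hy
  have h6 : 0 < (R + 1) * ρ := by positivity
  rw [mem_closedBall] at hz hy
  refine sub_growth hsub hρ hR0 hR hC (y := y) (L := L)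
        (by rw [mem_closedBall]; linarith) (by linarith) (by linarith) z ?_
  rw [mem_closedBall]
  have := dist_triangle_right z y x0
  linarith


lemma curve_ftc {m : ℕ} {F : Euc m → Euc m → ℝ}
    (hFc : Continuous fun z : Euc m × Euc m => F z.1 z.2) (hco : IsCoer F) {b : ℝ}
    (hne : ∀ y, ∃ q, F y q ≤ b) {ζ : ℝ → Euc m} {C : NNReal} (hζ : LipschitzWith C ζ)
    {g : Euc m → ℝ} {a a' : ℝ} (haa : a ≤ a')
    (hac : AbsolutelyContinuousOnInterval (fun s => g (ζ s)) a a')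
    (hg : ∀ᵐ s : ℝ, s ∈ Icc a a' → ∃ p, HasGradientAt g p (ζ s) ∧ F (ζ s) p ≤ b) :
    g (ζ a') - g (ζ a) ≤ ∫ s in a..a', suppFn F b (ζ s) (deriv ζ s) := by
  rw [← hac.integral_deriv_eq_sub]
  refine intervalIntegral.integral_mono_ae_restrict haa hac.intervalIntegrable_deriv
    (sint_integrable hFc hco hne hζ a a') ?_
  rw [EventuallyLE, ae_restrict_iff' measurableSet_Icc]
  filter_upwards [hg, hζ.ae_differentiableAt_real] with s hs hd hmem
  obtain ⟨p, hp, hF⟩ := hs hmem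
  have h1 : HasDerivAt (fun s => g (ζ s)) ⟪p, deriv ζ s⟫ s := by
    have := (hasGradientAt_iff_hasFDerivAt.1 hp).comp_hasDerivAt s hd.hasDerivAt
    simpa [Function.comp_def] using this
  rw [h1.deriv]
  exact le_suppFn hco _ hF

lemma sub_curve {m : ℕ} {F : Euc m → Euc m → ℝ}
    (hFc : Continuous fun z : Euc m × Euc m => F z.1 z.2) (hco : IsCoer F) {b : ℝ}
    (hne : ∀ y, ∃ q, F y q ≤ b) {u : Euc m → ℝ} (hsub : IsVSubOn F b univ u)
    {ξ : ℝ → Euc m} {C : NNReal} (hξ : LipschitzWith C ξ) {δ : ℝ} (hδ : 0 < δ) :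
    u (ξ 1) - u (ξ 0) ≤ ∫ s in (0:ℝ)..1, suppFn F (b + δ) (ξ s) (deriv ξ s) := by
  have hne' : ∀ y, ∃ q, F y q ≤ b + δ := fun y => by
    obtain ⟨q, hq⟩ := hne y
    exact ⟨q, by linarith⟩
  obtain ⟨r0, hr0⟩ := (isCompact_Icc (a := (0:ℝ)) (b := 1)).exists_bound_of_continuousOn
    hξ.continuous.continuousOn
  have hr00 : 0 ≤ r0 := (norm_nonneg _).trans (hr0 0 ⟨le_rfl, zero_le_one⟩)
  obtain ⟨Ku, hKu⟩ := sub_lip hco hsub (0 : Euc m) (ρ := 2 * (r0 + 2)) (by linarith)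
  rw [show 2 * (r0 + 2) / 2 = r0 + 2 by ring] at hKu
  obtain ⟨uu, huu, heq⟩ := hKu.extend_real
  obtain ⟨R, hR0, hR⟩ := hco.bound (isCompact_closedBall (0 : Euc m) (r0 + 1)) b
  have huc := ((isCompact_closedBall (0 : Euc m) (r0 + 1)).prod
    (isCompact_closedBall (0 : Euc m) R)).uniformContinuousOn_of_continuous hFc.continuousOn
  obtain ⟨τ, hτ, huc⟩ := Metric.uniformContinuousOn_iff.1 huc δ hδ
  set I := ∫ s in (0:ℝ)..1, suppFn F (b + δ) (ξ s) (deriv ξ s) with hI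
  have hin : ∀ s ∈ Icc (0:ℝ) 1, ∀ y : Euc m, ‖y‖ < 1 → ‖ξ s + y‖ < r0 + 1 := by
    intro s hs y hy
    have := hr0 s hs
    have := norm_add_le (ξ s) y
    linarith
  have h01 : (0:ℝ) ∈ Icc (0:ℝ) 1 := ⟨le_rfl, zero_le_one⟩
  have h11 : (1:ℝ) ∈ Icc (0:ℝ) 1 := ⟨zero_le_one, le_rfl⟩
  have hae : ∀ᵐ y : Euc m, ∀ᵐ s : ℝ, DifferentiableAt ℝ uu (ξ s + y) := by
    have hmeas : MeasurableSet {p : ℝ × Euc m | DifferentiableAt ℝ uu (ξ p.1 + p.2)} := by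
      have hc : Continuous fun p : ℝ × Euc m => ξ p.1 + p.2 :=
        (hξ.continuous.comp continuous_fst).add continuous_snd
      exact hc.measurable (measurableSet_of_differentiableAt ℝ uu)
    refine (Measure.ae_ae_comm (p := fun s y => DifferentiableAt ℝ uu (ξ s + y)) hmeas).1 ?_
    refine Eventually.of_forall fun s => ?_
    exact (measurePreserving_add_left volume (ξ s)).quasiMeasurePreserving.ae
      huu.ae_differentiableAt
  have hgood : ∀ y : Euc m, ‖y‖ < min τ 1 → (∀ᵐ s : ℝ, DifferentiableAt ℝ uu (ξ s + y)) →
      uu (ξ 1 + y) - uu (ξ 0 + y) ≤ I := by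
    intro y hy hd
    have hy1 : ‖y‖ < 1 := hy.trans_le (min_le_right _ _)
    have hyτ : ‖y‖ < τ := hy.trans_le (min_le_left _ _)
    have hζ : LipschitzWith C fun s => ξ s + y := by
      simpa using hξ.add (LipschitzWith.const y)
    have hder : ∀ s, deriv (fun s => ξ s + y) s = deriv ξ s := fun s => deriv_add_const y
    have hnear : ∀ s ∈ Icc (0:ℝ) 1, u =ᶠ[𝓝 (ξ s + y)] uu := by
      intro s hs
      have : ball (0 : Euc m) (r0 + 2) ∈ 𝓝 (ξ s + y) := by
        refine isOpen_ball.mem_nhds ?_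
        rw [mem_ball_zero_iff]
        have := hin s hs y hy1
        linarith
      filter_upwards [this] with w hw
      exact heq (ball_subset_closedBall hw)
    have h1 := curve_ftc hFc hco hne hζ (g := u) zero_le_one (by
      have h2 : LipschitzOnWith (Ku * C) (fun s => u (ξ s + y)) (uIcc 0 1) := by
        refine hKu.comp (hζ.lipschitzOnWith (s := uIcc 0 1)) ?_
        intro s hs
        rw [uIcc_of_le zero_le_one] at hs
        have := hin s hs y hy1
        rw [mem_closedBall_zero_iff]
        linarith
      exact h2.absolutelyContinuousOnInterval) (by
      filter_upwards [hd] with s hs hmem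
      have h3 : HasGradientAt u (gradient uu (ξ s + y)) (ξ s + y) :=
        hs.hasGradientAt.congr_of_eventuallyEq (hnear s hmem)
      exact ⟨_, h3, sub_diff hFc hsub h3⟩)
    rw [← (hnear 1 h11).self_of_nhds, ← (hnear 0 h01).self_of_nhds]
    refine h1.trans ?_
    refine intervalIntegral.integral_mono_on zero_le_one (sint_integrable hFc hco hne hζ 0 1)
      (sint_integrable hFc hco hne' hξ 0 1) ?_
    intro s hs
    rw [hder]
    refine suppFn_mono hco (hne _) ?_ _
    intro q hq
    have hk1 := hin s hs y hy1
    have hk2 := hin s hs 0 (by simp)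
    rw [add_zero] at hk2
    have hqR : ‖q‖ ≤ R := hR (ξ s + y) (by rw [mem_closedBall_zero_iff]; exact hk1.le) q hq
    have := huc (ξ s + y, q) ⟨by simpa using hk1.le, by simpa using hqR⟩
      (ξ s, q) ⟨by simpa using hk2.le, by simpa using hqR⟩ (by
        rw [Prod.dist_eq]; simpa using hyτ)
    rw [Real.dist_eq] at this
    have := (abs_lt.1 this).1
    simp only at this
    linarith
  have hfinal : uu (ξ 1) - uu (ξ 0) ≤ I := by
    by_contra hlt
    push Not at hlt
    have hdense := Measure.dense_of_ae hae
    have hG : Continuous fun y : Euc m => uu (ξ 1 + y) - uu (ξ 0 + y) := by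
      have := huu.continuous
      fun_prop
    have ho : IsOpen ({y : Euc m | I < uu (ξ 1 + y) - uu (ξ 0 + y)} ∩ ball 0 (min τ 1)) :=
      (isOpen_lt continuous_const hG).inter isOpen_ball
    obtain ⟨y, ⟨hy1, hy2⟩, hy3⟩ := hdense.inter_open_nonempty _ ho
      ⟨0, by simpa using hlt, by simpa using hτ⟩
    have := hgood y (by simpa using hy2) hy3
    have hy1' : I < uu (ξ 1 + y) - uu (ξ 0 + y) := hy1
    linarith
  have e1 : u (ξ 1) = uu (ξ 1) := heq (by
    rw [mem_closedBall_zero_iff]; have := hr0 1 h11; linarith)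
  have e0 : u (ξ 0) = uu (ξ 0) := heq (by
    rw [mem_closedBall_zero_iff]; have := hr0 0 h01; linarith)
  rw [e1, e0]
  exact hfinal

lemma seg_lip {m : ℕ} (y1 y2 : Euc m) :
    LipschitzWith ‖y2 - y1‖₊ fun s : ℝ => y1 + s • (y2 - y1) := by
  refine LipschitzWith.of_dist_le_mul fun s t => ?_
  rw [dist_add_left, dist_eq_norm, ← sub_smul, norm_smul, mul_comm]
  rfl

lemma seg_deriv {m : ℕ} (y1 y2 : Euc m) (s : ℝ) :
    deriv (fun s : ℝ => y1 + s • (y2 - y1)) s = y2 - y1 := by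
  have : HasDerivAt (fun s : ℝ => y1 + s • (y2 - y1)) ((1 : ℝ) • (y2 - y1)) s :=
    ((hasDerivAt_id s).smul_const (y2 - y1)).const_add y1
  simpa using this.deriv

lemma seg_len {m : ℕ} {F : Euc m → Euc m → ℝ} (hco : IsCoer F) {b : ℝ}
    (hne : ∀ y, ∃ q, F y q ≤ b) {h : Euc m → ℝ} {y1 y2 : Euc m} {H R : ℝ}
    {K : Set (Euc m)} (hKc : Convex ℝ K) (h1 : y1 ∈ K) (h2 : y2 ∈ K)
    (hR : ∀ y ∈ K, ∀ q, F y q ≤ b → ‖q‖ ≤ R) (hH : ∀ y ∈ K, ‖h y‖ ≤ H) :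
    ∫ s in (0:ℝ)..1, h (y1 + s • (y2 - y1)) * suppFn F b (y1 + s • (y2 - y1)) (y2 - y1)
      ≤ H * (R * ‖y2 - y1‖) := by
  have := intervalIntegral.norm_integral_le_of_norm_le_const (a := (0:ℝ)) (b := 1)
    (f := fun s : ℝ => h (y1 + s • (y2 - y1)) * suppFn F b (y1 + s • (y2 - y1)) (y2 - y1))
    (C := H * (R * ‖y2 - y1‖)) (by
      intro s hs
      rw [uIoc_of_le zero_le_one] at hs
      have hm : y1 + s • (y2 - y1) ∈ K := hKc.add_smul_sub_mem h1 h2 ⟨hs.1.le, hs.2⟩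
      rw [norm_mul]
      exact mul_le_mul (hH _ hm) (abs_suppFn_le hco (hne _) (hR _ hm)) (norm_nonneg _)
        ((norm_nonneg _).trans (hH _ hm)))
  have h3 := (le_abs_self _).trans this
  simpa using h3

lemma IsVSubOn.mono_level {m : ℕ} {F : Euc m → Euc m → ℝ} {b b' : ℝ} {u : Euc m → ℝ}
    (hsub : IsVSubOn F b univ u) (hbb : b ≤ b') : IsVSubOn F b' univ u :=
  ⟨hsub.1, fun ψ hψ y hy hm => (hsub.2 ψ hψ y hy hm).trans hbb⟩

lemma suppFn_tendsto {m : ℕ} {F : Euc m → Euc m → ℝ}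
    (hFc : Continuous fun z : Euc m × Euc m => F z.1 z.2) (hco : IsCoer F) {b : ℝ}
    {y : Euc m} (hne : ∃ q, F y q ≤ b) (v : Euc m) :
    Tendsto (fun n : ℕ => suppFn F (b + 1 / ((n : ℝ) + 1)) y v) atTop (𝓝 (suppFn F b y v)) := by
  have hne' : ∀ n : ℕ, ∃ q, F y q ≤ b + 1 / ((n : ℝ) + 1) := fun n => by
    obtain ⟨q, hq⟩ := hne
    have : 0 < 1 / ((n : ℝ) + 1) := by positivity
    exact ⟨q, by linarith⟩
  rw [tendsto_order]
  constructor
  · intro a ha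
    refine Eventually.of_forall fun n => lt_of_lt_of_le ha (suppFn_mono hco hne ?_ v)
    intro q hq
    have : 0 < 1 / ((n : ℝ) + 1) := by positivity
    linarith
  · intro a ha
    by_cases hex : ∃ N : ℕ, suppFn F (b + 1 / ((N : ℝ) + 1)) y v < a
    · obtain ⟨N, hN⟩ := hex
      filter_upwards [eventually_ge_atTop N] with n hn
      refine lt_of_le_of_lt (suppFn_mono hco (hne' n) ?_ v) hN
      intro q hq
      have := one_div_le_one_div_of_le (a := (N : ℝ) + 1) (b := (n : ℝ) + 1) (by positivity)
        (by have : (N : ℝ) ≤ n := by exact_mod_cast hn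
            linarith)
      linarith
    · push Not at hex
      have hbl : Tendsto (fun n : ℕ => b + 1 / ((n : ℝ) + 1)) atTop (𝓝 b) := by
        simpa using (tendsto_one_div_add_atTop_nhds_zero_nat (𝕜 := ℝ)).const_add b
      have := suppFn_seq hFc hco (y := fun _ => y) (v := fun _ => v) tendsto_const_nhds
        tendsto_const_nhds hbl hne' hex
      linarith

lemma len_lower {m : ℕ} {F : Euc m → Euc m → ℝ}
    (hFc : Continuous fun z : Euc m × Euc m => F z.1 z.2) (hco : IsCoer F)
    (hfin : (subsolLevels F).Nonempty) {b : ℝ} (hb : critVal F ≤ b) (y1 y2 : Euc m) :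
    ∃ B : ℝ, ∀ ξ : ℝ → Euc m, IsAdmCurve ξ y1 y2 →
      B ≤ ∫ s in (0:ℝ)..1, suppFn F b (ξ s) (deriv ξ s) := by
  have hne : ∀ b', b ≤ b' → ∀ y, ∃ q, F y q ≤ b' :=
    fun b' hb' => level_nonempty hFc hco hfin (hb.trans hb')
  set K := closedBall (0 : Euc m) (‖y1‖ + ‖y2‖) with hK
  have h1K : y1 ∈ K := by rw [hK, mem_closedBall_zero_iff]; linarith [norm_nonneg y2]
  have h2K : y2 ∈ K := by rw [hK, mem_closedBall_zero_iff]; linarith [norm_nonneg y1]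
  obtain ⟨R, hR0, hR⟩ := hco.bound (isCompact_closedBall (0 : Euc m) (‖y1‖ + ‖y2‖)) (b + 1)
  refine ⟨-(R * ‖y1 - y2‖), ?_⟩
  rintro ξ ⟨⟨C, hξ⟩, h0, h1⟩
  have hn : ∀ n : ℕ, -(R * ‖y1 - y2‖) ≤
      ∫ s in (0:ℝ)..1, suppFn F (b + 1 / ((n : ℝ) + 1)) (ξ s) (deriv ξ s) := by
    intro n
    set δ := 1 / ((n : ℝ) + 1) with hδ
    have hδ0 : 0 < δ := by positivity
    have hδ1 : δ ≤ 1 := by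
      rw [hδ, div_le_one (by positivity)]; linarith [Nat.cast_nonneg (α := ℝ) n]
    obtain ⟨b', ⟨u, hu⟩, hb'⟩ := exists_lt_of_csInf_lt hfin
      (show sInf (subsolLevels F) < b + δ / 2 from lt_of_le_of_lt hb (by linarith))
    have hu' := hu.mono_level hb'.le
    have e1 := sub_curve hFc hco (hne (b + δ / 2) (by linarith)) hu' hξ (half_pos hδ0)
    have e2 := sub_curve hFc hco (hne (b + δ / 2) (by linarith)) hu' (seg_lip y2 y1)
      (half_pos hδ0)
    simp only [seg_deriv] at e2
    rw [show b + δ / 2 + δ / 2 = b + δ by ring] at e1 e2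
    have e3 := seg_len hco (hne (b + δ) (by linarith)) (h := fun _ => 1) (H := 1)
      (R := R) (convex_closedBall (0 : Euc m) (‖y1‖ + ‖y2‖)) h2K h1K
      (fun y hy q hq => hR y hy q (by linarith)) (fun _ _ => by simp)
    simp only [one_mul] at e3
    simp only [one_smul, zero_smul, add_zero, add_sub_cancel] at e2
    rw [h0, h1] at e1
    linarith
  have hξK : IsCompact (ξ '' uIcc 0 1) := isCompact_uIcc.image hξ.continuous
  obtain ⟨R', hR0', hR'⟩ := hco.bound hξK (b + 1)
  refine ge_of_tendsto' (f := fun n : ℕ =>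
    ∫ s in (0:ℝ)..1, suppFn F (b + 1 / ((n : ℝ) + 1)) (ξ s) (deriv ξ s)) (x := atTop) ?_ hn
  refine intervalIntegral.tendsto_integral_filter_of_dominated_convergence
    (fun _ => R' * C) ?_ ?_ intervalIntegrable_const ?_
  · refine Eventually.of_forall fun n => ?_
    have : 0 < 1 / ((n : ℝ) + 1) := by positivity
    exact (intervalIntegrable_iff.1 (sint_integrable hFc hco
      (hne (b + 1 / ((n : ℝ) + 1)) (by linarith)) hξ 0 1)).aestronglyMeasurable
  · refine Eventually.of_forall fun n => Eventually.of_forall fun s hs => ?_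
    have h1 : 0 < 1 / ((n : ℝ) + 1) := by positivity
    have h2 : 1 / ((n : ℝ) + 1) ≤ 1 := by
      rw [div_le_one (by positivity)]; linarith [Nat.cast_nonneg (α := ℝ) n]
    refine (abs_suppFn_le hco (hne _ (by linarith) _) (R := R') ?_).trans
      (mul_le_mul_of_nonneg_left (norm_deriv_le_of_lipschitz hξ) hR0')
    intro q hq
    exact hR' (ξ s) ⟨s, uIoc_subset_uIcc hs, rfl⟩ q (by linarith)
  · exact Eventually.of_forall fun s _ => suppFn_tendsto hFc hco (hne b le_rfl _) _


lemma dist_bdd {m : ℕ} {F : Euc m → Euc m → ℝ}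
    (hFc : Continuous fun z : Euc m × Euc m => F z.1 z.2) (hco : IsCoer F)
    (hfin : (subsolLevels F).Nonempty) {b : ℝ} (hb : critVal F ≤ b)
    {h : Euc m → ℝ} (hh : Continuous h) (hh1 : ∀ y, 1 ≤ h y)
    (hh2 : ∀ y : Euc m, 1 < h y → F y 0 ≤ b) (y1 y2 : Euc m) :
    BddBelow { L : ℝ | ∃ ξ : ℝ → Euc m, IsAdmCurve ξ y1 y2 ∧ L = wIntrinsicLen F b h ξ } := by
  have hne := level_nonempty hFc hco hfin hb
  obtain ⟨B, hB⟩ := len_lower hFc hco hfin hb y1 y2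
  refine ⟨B, ?_⟩
  rintro L ⟨ξ, hξ, rfl⟩
  refine (hB ξ hξ).trans ?_
  obtain ⟨⟨C, hC⟩, -, -⟩ := hξ
  exact intervalIntegral.integral_mono_on zero_le_one (sint_integrable hFc hco hne hC 0 1)
    (wint_integrable hFc hco hne hh hC 0 1) (fun s _ => suppFn_le_weight hco hh1 hh2 _ _)

lemma dist_nonempty {m : ℕ} {F : Euc m → Euc m → ℝ} {b : ℝ} {h : Euc m → ℝ} (y1 y2 : Euc m) :
    { L : ℝ | ∃ ξ : ℝ → Euc m, IsAdmCurve ξ y1 y2 ∧ L = wIntrinsicLen F b h ξ }.Nonempty :=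
  ⟨_, _, ⟨⟨_, seg_lip y1 y2⟩, by simp, by simp⟩, rfl⟩

lemma reparam_len {m : ℕ} {F : Euc m → Euc m → ℝ} {b : ℝ} {h : Euc m → ℝ} {ξ : ℝ → Euc m}
    {t : ℝ} (ht : 0 ≤ t) :
    wIntrinsicLen F b h (fun s => ξ (t * s)) =
      ∫ s in (0:ℝ)..t, h (ξ s) * suppFn F b (ξ s) (deriv ξ s) := by
  have := intervalIntegral.smul_integral_comp_mul_left
    (fun s => h (ξ s) * suppFn F b (ξ s) (deriv ξ s)) t (a := 0) (b := 1)
  rw [mul_zero, mul_one] at this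
  rw [← this, wIntrinsicLen, ← intervalIntegral.integral_smul]
  congr 1
  funext s
  rw [deriv_comp_mul_left, suppFn_smul ht, smul_eq_mul]
  ring

lemma ext_len {m : ℕ} {F : Euc m → Euc m → ℝ}
    (hFc : Continuous fun z : Euc m × Euc m => F z.1 z.2) (hco : IsCoer F) {b : ℝ}
    (hne : ∀ y, ∃ q, F y q ≤ b)
    {h : Euc m → ℝ} (hh : Continuous h) {ξ : ℝ → Euc m} {z0 y1 : Euc m}
    (hξ : IsAdmCurve ξ z0 y1) (y2 : Euc m) :
    ∃ ζ, IsAdmCurve ζ z0 y2 ∧ wIntrinsicLen F b h ζ = wIntrinsicLen F b h ξ +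
      ∫ s in (0:ℝ)..1, h (y1 + s•(y2-y1)) * suppFn F b (y1 + s•(y2-y1)) (y2-y1) := by
  obtain ⟨⟨C, hC⟩, h0, h1⟩ := hξ
  have l2 : LipschitzWith 2 (fun s : ℝ => 2 * s) := by
    refine LipschitzWith.of_dist_le_mul fun x y => ?_
    rw [Real.dist_eq, Real.dist_eq, ← mul_sub, abs_mul]; simp
  have l3 : LipschitzWith 2 (fun s : ℝ => 2 * s - 1) := by
    refine LipschitzWith.of_dist_le_mul fun x y => ?_
    rw [Real.dist_eq, Real.dist_eq, show 2*x-1-(2*y-1) = 2*(x-y) by ring, abs_mul]; simp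
  set ζ : ℝ → Euc m := fun s => ξ (min (2*s) 1) + max (2*s-1) 0 • (y2-y1) with hζ
  have hζl : ∃ C', LipschitzWith C' ζ := by
    have a1 := hC.comp (l2.min_const 1)
    have a2 := (seg_lip (0 : Euc m) (y2 - y1)).comp (l3.max_const 0)
    have a3 := a1.add a2
    refine ⟨C * 2 + ‖y2 - y1 - 0‖₊ * 2, ?_⟩
    have hz : ζ = fun x => (ξ ∘ fun x => min (2 * x) 1) x +
        ((fun s : ℝ => 0 + s • (y2 - y1 - 0)) ∘ fun x : ℝ => max (2 * x - 1) 0) x := by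
      funext s
      simp [hζ]
    rw [hz]
    exact a3
  obtain ⟨C', hC'⟩ := hζl
  refine ⟨ζ, ⟨⟨C', hC'⟩, ?_, ?_⟩, ?_⟩
  · simp [hζ, h0]
  · simp only [hζ]
    norm_num [h1]
  have hi := fun a a' => wint_integrable hFc hco hne hh hC' a a'
  rw [wIntrinsicLen, ← intervalIntegral.integral_add_adjacent_intervals (hi 0 (1/2)) (hi (1/2) 1)]
  congr 1
  · have := intervalIntegral.smul_integral_comp_mul_left
      (fun s => h (ξ s) * suppFn F b (ξ s) (deriv ξ s)) 2 (a := 0) (b := 1/2)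
    rw [mul_zero, mul_one_div_cancel two_ne_zero] at this
    rw [wIntrinsicLen, ← this, ← intervalIntegral.integral_smul]
    refine intervalIntegral.integral_congr_Ioo_of_le (by norm_num) fun s hs => ?_
    have he : ζ =ᶠ[𝓝 s] fun s => ξ (2 * s) := by
      filter_upwards [Iio_mem_nhds hs.2] with x hx
      have hx : x < 1/2 := hx
      simp only [hζ]
      rw [min_eq_left (by linarith), max_eq_right (by linarith)]
      simp
    rw [he.deriv_eq, he.eq_of_nhds, deriv_comp_mul_left, suppFn_smul zero_le_two, smul_eq_mul]
    ring
  · have := intervalIntegral.smul_integral_comp_mul_sub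
      (fun s => h (y1 + s•(y2-y1)) * suppFn F b (y1 + s•(y2-y1)) (y2-y1)) 2 1 (a := 1/2) (b := 1)
    rw [show (2:ℝ) * (1/2) - 1 = 0 by norm_num, show (2:ℝ) * 1 - 1 = 1 by norm_num] at this
    rw [← this, ← intervalIntegral.integral_smul]
    refine intervalIntegral.integral_congr_Ioo_of_le (by norm_num) fun s hs => ?_
    have he : ζ =ᶠ[𝓝 s] fun s => y1 + (2 * s - 1) • (y2-y1) := by
      filter_upwards [Ioi_mem_nhds hs.1] with x hx
      have hx : 1/2 < x := hx
      simp only [hζ]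
      rw [min_eq_right (by linarith), max_eq_left (by linarith), h1]
    have hd : deriv (fun s : ℝ => y1 + (2 * s - 1) • (y2-y1)) s = (2:ℝ) • (y2 - y1) := by
      have : HasDerivAt (fun s : ℝ => 2 * s - 1) 2 s := by
        simpa using ((hasDerivAt_id s).const_mul 2).sub_const 1
      exact ((this.smul_const (y2 - y1)).const_add y1).deriv
    rw [he.deriv_eq, he.eq_of_nhds, hd, suppFn_smul zero_le_two, smul_eq_mul]
    ring

lemma dist_ext {m : ℕ} {F : Euc m → Euc m → ℝ}
    (hFc : Continuous fun z : Euc m × Euc m => F z.1 z.2) (hco : IsCoer F)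
    (hfin : (subsolLevels F).Nonempty) {b : ℝ} (hb : critVal F ≤ b)
    {h : Euc m → ℝ} (hh : Continuous h) (hh1 : ∀ y, 1 ≤ h y)
    (hh2 : ∀ y : Euc m, 1 < h y → F y 0 ≤ b) (z0 : Euc m) {K : Set (Euc m)} {y1 y2 : Euc m}
    (hKc : Convex ℝ K) (h1 : y1 ∈ K) (h2 : y2 ∈ K) {R H : ℝ}
    (hR : ∀ y ∈ K, ∀ q, F y q ≤ b → ‖q‖ ≤ R)
    (hH : ∀ y ∈ K, ‖h y‖ ≤ H) :
    wIntrinsicDist F b h z0 y2 ≤ wIntrinsicDist F b h z0 y1 + H * (R * ‖y2-y1‖) := by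
  have hne := level_nonempty hFc hco hfin hb
  have key : wIntrinsicDist F b h z0 y2 - H * (R * ‖y2-y1‖) ≤ wIntrinsicDist F b h z0 y1 := by
    refine le_csInf (dist_nonempty z0 y1) ?_
    rintro L ⟨ξ, hξ, rfl⟩
    obtain ⟨ζ, hζ, hl⟩ := ext_len hFc hco hne hh hξ y2
    have := csInf_le (dist_bdd hFc hco hfin hb hh hh1 hh2 z0 y2) ⟨ζ, hζ, rfl⟩
    have e := seg_len hco hne hKc h1 h2 hR hH
    rw [hl] at this
    unfold wIntrinsicDist
    linarith
  linarith

lemma dist_locLip {m : ℕ} {F : Euc m → Euc m → ℝ}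
    (hFc : Continuous fun z : Euc m × Euc m => F z.1 z.2) (hco : IsCoer F)
    (hfin : (subsolLevels F).Nonempty) {b : ℝ} (hb : critVal F ≤ b)
    {h : Euc m → ℝ} (hh : Continuous h) (hh1 : ∀ y, 1 ≤ h y)
    (hh2 : ∀ y : Euc m, 1 < h y → F y 0 ≤ b) (z0 : Euc m) :
    LocallyLipschitz (fun y => wIntrinsicDist F b h z0 y) := by
  intro x
  obtain ⟨R, hR0, hR⟩ := hco.bound (isCompact_closedBall x 1) b
  obtain ⟨H, hH⟩ := (isCompact_closedBall x 1).exists_bound_of_continuousOn hh.continuousOn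
  have hH0 : 0 ≤ H := (norm_nonneg _).trans (hH x (mem_closedBall_self zero_le_one))
  refine ⟨⟨H * R, mul_nonneg hH0 hR0⟩, closedBall x 1, closedBall_mem_nhds x one_pos, ?_⟩
  refine LipschitzOnWith.of_le_add_mul _ fun y hy w hw => ?_
  have := dist_ext hFc hco hfin hb hh hh1 hh2 z0 (convex_closedBall x 1) hw hy hR hH
  rw [dist_eq_norm]
  rw [← mul_assoc] at this
  exact this

lemma last_exit {m : ℕ} {ξ : ℝ → Euc m} (hξ : Continuous ξ) {z0 y : Euc m} (h0 : ξ 0 = z0)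
    (h1 : ξ 1 = y) {r : ℝ} (hr : 0 < r) (hrd : r ≤ dist z0 y) :
    ∃ t ∈ Icc (0:ℝ) 1, dist (ξ t) y = r ∧ ∀ s ∈ Icc t 1, dist (ξ s) y ≤ r := by
  have hcont : Continuous fun t => dist (ξ t) y := hξ.dist continuous_const
  have hcl : IsClosed {t : ℝ | r ≤ dist (ξ t) y} := isClosed_le continuous_const hcont
  have hcp : IsCompact (Icc (0:ℝ) 1 ∩ {t : ℝ | r ≤ dist (ξ t) y}) := isCompact_Icc.inter_right hcl
  obtain ⟨t, ⟨ht, htr⟩, htmax⟩ := hcp.exists_isGreatest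
    ⟨0, ⟨le_rfl, zero_le_one⟩, by simpa [h0] using hrd⟩
  have hlt : ∀ s ∈ Ioc t 1, dist (ξ s) y < r := by
    intro s hs
    by_contra hcon
    have := htmax ⟨⟨ht.1.trans hs.1.le, hs.2⟩, not_lt.1 hcon⟩
    linarith [hs.1]
  have ht1 : t < 1 := by
    refine lt_of_le_of_ne ht.2 fun e => ?_
    have htr : r ≤ dist (ξ t) y := htr
    rw [e, h1, dist_self] at htr
    linarith
  have hle : ∀ s ∈ Icc t 1, dist (ξ s) y ≤ r := by
    have hc2 : IsClosed {t : ℝ | dist (ξ t) y ≤ r} := isClosed_le hcont continuous_const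
    have : closure (Ioc t 1) ⊆ {t : ℝ | dist (ξ t) y ≤ r} :=
      closure_minimal (fun s hs => (hlt s hs).le) hc2
    rw [closure_Ioc ht1.ne] at this
    exact this
  exact ⟨t, ht, le_antisymm (hle t ⟨le_rfl, ht1.le⟩) htr, hle⟩

lemma dist_sup {m : ℕ} {F : Euc m → Euc m → ℝ}
    (hFc : Continuous fun z : Euc m × Euc m => F z.1 z.2) (hco : IsCoer F)
    (hfin : (subsolLevels F).Nonempty) {b : ℝ} (hb : critVal F ≤ b)
    {h : Euc m → ℝ} (hh : Continuous h) (hh1 : ∀ y, 1 ≤ h y)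
    (hh2 : ∀ y : Euc m, 1 < h y → F y 0 ≤ b) (z0 : Euc m)
    {ψ : Euc m → ℝ} (hψ : ContDiff ℝ 1 ψ) {y : Euc m} (hy : y ≠ z0)
    (hmin : IsLocalMin (fun z => wIntrinsicDist F b h z0 z - ψ z) y) :
    b ≤ F y (gradient ψ y) := by
  by_contra hlt
  rw [not_le] at hlt
  have hne := level_nonempty hFc hco hfin hb
  have hgc : Continuous (gradient ψ) :=
    (InnerProductSpace.toDual ℝ (Euc m)).symm.continuous.comp (hψ.continuous_fderiv one_ne_zero)
  have hGc : Continuous fun z : Euc m × Euc m => F z.1 (gradient ψ z.1 + z.2) :=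
    hFc.comp (continuous_fst.prodMk ((hgc.comp continuous_fst).add continuous_snd))
  have hev : ∀ᶠ z : Euc m × Euc m in 𝓝 (y, 0), F z.1 (gradient ψ z.1 + z.2) < b :=
    hGc.continuousAt.eventually_lt continuousAt_const (by simpa using hlt)
  obtain ⟨ε, hε, hεb⟩ := Metric.eventually_nhds_iff.1 hev
  obtain ⟨δ, hδ, hδb⟩ := Metric.eventually_nhds_iff.1 hmin
  have hd : 0 < dist z0 y := dist_pos.2 hy.symm
  set r := min (min (ε/2) (δ/2)) (dist z0 y) with hr
  have hr0 : 0 < r := by positivity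
  have hrε : r ≤ ε/2 := (min_le_left _ _).trans (min_le_left _ _)
  have hrδ : r ≤ δ/2 := (min_le_left _ _).trans (min_le_right _ _)
  have hrd : r ≤ dist z0 y := min_le_right _ _
  set η := ε/2 with hη
  have hη0 : 0 < η := half_pos hε
  have key : ∀ ξ, IsAdmCurve ξ z0 y → wIntrinsicDist F b h z0 y + η * r ≤ wIntrinsicLen F b h ξ := by
    rintro ξ ⟨⟨C, hC⟩, h0, h1⟩
    obtain ⟨t, ht, htr, hball⟩ := last_exit hC.continuous h0 h1 hr0 hrd
    set e := (η/r) • (y - ξ t) with he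
    have hnorm : ‖y - ξ t‖ = r := by rw [← dist_eq_norm, dist_comm, htr]
    have hen : ‖e‖ = η := by
      rw [he, norm_smul, hnorm, Real.norm_of_nonneg (by positivity)]
      field_simp
    set φ : Euc m → ℝ := fun w => ψ w + ⟪e, w⟫ with hφ
    have hφc : ContDiff ℝ 1 φ := hψ.add (contDiff_const.inner ℝ contDiff_id)
    have hφg : ∀ w, HasGradientAt φ (gradient ψ w + e) w := by
      intro w
      have a1 := ((hψ.differentiable one_ne_zero) w).hasGradientAt.hasFDerivAt
      have a2 : HasFDerivAt (fun w : Euc m => ⟪e, w⟫) (InnerProductSpace.toDual ℝ (Euc m) e) w :=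
        (InnerProductSpace.toDual ℝ (Euc m) e).hasFDerivAt
      rw [hasGradientAt_iff_hasFDerivAt, map_add]
      exact a1.add a2
    obtain ⟨Kφ, hKφ⟩ := hφc.contDiffOn.exists_lipschitzOnWith (s := closedBall y r)
      (by decide) (convex_closedBall y r) (isCompact_closedBall y r)
    have hac : AbsolutelyContinuousOnInterval (fun s => φ (ξ s)) t 1 := by
      refine LipschitzOnWith.absolutelyContinuousOnInterval (K := Kφ * C) ?_
      rw [uIcc_of_le ht.2]
      exact hKφ.comp hC.lipschitzOnWith (fun s hs => hball s hs)
    have hftc := curve_ftc hFc hco hne hC (g := φ) ht.2 hac (Eventually.of_forall fun s hs => by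
      refine ⟨_, hφg (ξ s), (hεb (y := (ξ s, e)) ?_).le⟩
      rw [Prod.dist_eq]
      refine max_lt ((hball s hs).trans_lt (by linarith)) ?_
      simp only [dist_zero_right, hen]
      linarith)
    have hi := fun a a' => wint_integrable hFc hco hne hh hC a a'
    have hm : ∫ s in t..1, suppFn F b (ξ s) (deriv ξ s) ≤
        ∫ s in t..1, h (ξ s) * suppFn F b (ξ s) (deriv ξ s) :=
      intervalIntegral.integral_mono_on ht.2 (sint_integrable hFc hco hne hC t 1)
        (hi t 1) (fun s _ => suppFn_le_weight hco hh1 hh2 _ _)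
    have hS : wIntrinsicDist F b h z0 (ξ t) ≤
        ∫ s in (0:ℝ)..t, h (ξ s) * suppFn F b (ξ s) (deriv ξ s) := by
      rw [← reparam_len ht.1]
      refine csInf_le (dist_bdd hFc hco hfin hb hh hh1 hh2 z0 (ξ t)) ⟨_, ⟨?_, ?_, ?_⟩, rfl⟩
      · refine ⟨C * ‖t‖₊, hC.comp ?_⟩
        refine LipschitzWith.of_dist_le_mul fun x y => ?_
        rw [Real.dist_eq, Real.dist_eq, ← mul_sub, abs_mul]; simp
      · simp [h0]
      · simp
    have hmn : wIntrinsicDist F b h z0 y - ψ y ≤ wIntrinsicDist F b h z0 (ξ t) - ψ (ξ t) :=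
      hδb (show dist (ξ t) y < δ by rw [htr]; linarith)
    have hin : ⟪e, y⟫ - ⟪e, ξ t⟫ = η * r := by
      rw [← inner_sub_right, he, real_inner_smul_left, real_inner_self_eq_norm_sq, hnorm]
      field_simp
    have hsplit := intervalIntegral.integral_add_adjacent_intervals (hi 0 t) (hi t 1)
    rw [wIntrinsicLen, ← hsplit]
    simp only [hφ, h1] at hftc
    linarith
  have : wIntrinsicDist F b h z0 y + η * r ≤ wIntrinsicDist F b h z0 y := by
    refine le_csInf (dist_nonempty z0 y) ?_
    rintro L ⟨ξ, hξ, rfl⟩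
    exact key ξ hξ
  have := mul_pos hη0 hr0
  linarith

theorem statement19
    {m : ℕ} (F : Euc m → Euc m → ℝ)
    (hFc : Continuous fun z : Euc m × Euc m => F z.1 z.2)
    (hFconv : ∀ y : Euc m, ConvexOn ℝ univ (F y))
    (hFcoer : ∀ Kc : Set (Euc m), IsCompact Kc → ∀ c : ℝ, ∃ R : ℝ,
      ∀ q : Euc m, R < ‖q‖ → ∀ y ∈ Kc, c < F y q)
    (hfin : (subsolLevels F).Nonempty) (hbdd : BddBelow (subsolLevels F))
    (b : ℝ) (hb : critVal F ≤ b)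
    (h : Euc m → ℝ) (hhCont : Continuous h) (hh1 : ∀ y, 1 ≤ h y)
    (hh2 : ∀ y : Euc m, 1 < h y → F y 0 ≤ b) :
    ∀ z0 : Euc m,
      LocallyLipschitz (fun y => wIntrinsicDist F b h z0 y) ∧
      IsVSupOn F b ({z0}ᶜ) (fun y => wIntrinsicDist F b h z0 y) := by
  intro z0
  have hco : IsCoer F := hFcoer
  have hL := dist_locLip hFc hco hfin hb hhCont hh1 hh2 z0
  refine ⟨hL, hL.continuous.lowerSemicontinuous.lowerSemicontinuousOn _, ?_⟩
  intro ψ hψ y hy hmin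
  exact dist_sup hFc hco hfin hb hhCont hh1 hh2 z0 hψ hy
    (hmin.isLocalMin (isOpen_compl_singleton.mem_nhds hy))
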